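/- Let M > 0, let I ⊆ [−M, 0) satisfy DCC and I' ⊆ [0, ∞) satisfy DCC, and let Λ be a nonempty index set with pairs (α_k, β_k) ∈ I × I' for k ∈ Λ. Define λ = inf { s ≥ 0 : (1 − s)·α_k + s·β_k ≥ 0 for all k ∈ Λ }. Assume λ > 0 and λ < ∞. Then there exists k_0 ∈ Λ with (1 − λ)·α_{k_0} + λ·β_{k_0} = 0. -/

import Mathlib

/-!
A set of reals with DCC is well-ordered, so by Dickson's lemma the pairs `(α k, β k)` have only
finitely many minimal elements, and each pair dominates one of them. For `0 ≤ s ≤ 1` the value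
`(1 - s) * α k + s * β k` is monotone in the pair, so on `[0, 1]` finitely many of the inequalities
imply all the others. If those finitely many were all strict at the threshold, they would persist
slightly to its left, contradicting minimality.
-/

open Set Filter Topology

theorem isPWO_of_not_exists_strictAnti {P : Type*} [LinearOrder P] {s : Set P}
    (hs : ¬∃ f : ℕ → P, (∀ n, f n ∈ s) ∧ StrictAnti f) : s.IsPWO :=
  isPWO_iff_isWF.mpr <| isWF_iff_no_descending_seq.mpr fun f hf hfs => hs ⟨f, hfs, hf⟩

theorem exists_finite_forall_exists_le_of_isPWO_range {ι P : Type*} [PartialOrder P] {p : ι → P}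
    (hp : (range p).IsPWO) : ∃ F : Set ι, F.Finite ∧ ∀ k, ∃ j ∈ F, p j ≤ p k := by
  have hfin : {x | Minimal (· ∈ range p) x}.Finite :=
    (setOfPred_minimal_antichain _).finite_of_partiallyWellOrderedOn
      (hp.mono fun _ hx => hx.prop)
  obtain ⟨F, himage, hinj⟩ := exists_image_eq_injOn_of_subset_range
    (fun x (hx : Minimal (· ∈ range p) x) => hx.prop)
  refine ⟨F, .of_finite_image (himage ▸ hfin) hinj, fun k => ?_⟩
  obtain ⟨x, hxk, hx⟩ := hp.exists_le_minimal (mem_range_self k)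
  obtain ⟨j, hj, rfl⟩ : x ∈ p '' F := himage ▸ hx
  exact ⟨j, hj, hxk⟩

section LeastSolution

variable {ι X Y : Type*} [LinearOrder X] [TopologicalSpace X] [OrderTopology X]
  [LinearOrder Y] [TopologicalSpace Y] [OrderClosedTopology Y] {f : ι → X → Y} {a b : X} {c : Y}

theorem isLeast_of_isGLB_of_continuous [NoTopOrder X] (hf : ∀ k, Continuous (f k))
    (hb : IsGLB {s | a ≤ s ∧ ∀ k, c ≤ f k s} b) : IsLeast {s | a ≤ s ∧ ∀ k, c ≤ f k s} b := by
  have hclosed : IsClosed {s | a ≤ s ∧ ∀ k, c ≤ f k s} := by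
    simp only [ofPred_and, ofPred_forall]
    exact isClosed_Ici.inter (isClosed_iInter fun k => isClosed_le continuous_const (hf k))
  exact ⟨hb.mem_of_isClosed hb.nonempty hclosed, hb.1⟩

theorem exists_mem_eq_of_isLeast_of_finite_dominating [DenselyOrdered X] {F : Set ι} (hF : F.Finite)
    (hcont : ∀ j ∈ F, ContinuousAt (f j) b)
    (hdom : ∀ k, ∃ j ∈ F, ∀ s ∈ Ico a b, f j s ≤ f k s)
    (hb : IsLeast {s | a ≤ s ∧ ∀ k, c ≤ f k s} b) (hab : a < b) : ∃ j ∈ F, f j b = c := by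
  by_contra! hne
  have hlt : ∀ᶠ s in 𝓝 b, ∀ j ∈ F, c < f j s :=
    hF.eventually_all.mpr fun j hj =>
      (hcont j hj).eventually_const_lt ((hb.1.2 j).lt_of_ne' (hne j hj))
  have : (𝓝[<] b).NeBot := nhdsLT_neBot_of_exists_lt ⟨a, hab⟩
  obtain ⟨s, hFs, hs⟩ := ((hlt.filter_mono nhdsWithin_le_nhds).and (Ico_mem_nhdsLT hab)).exists
  refine hs.2.not_ge (hb.2 ⟨hs.1, fun k => ?_⟩)
  obtain ⟨j, hj, hjk⟩ := hdom k
  exact (hFs j hj).le.trans (hjk s hs)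

end LeastSolution

theorem stmt_11_general {K Λ : Type*} [Field K] [LinearOrder K] [IsStrictOrderedRing K]
    [TopologicalSpace K] [OrderTopology K] {α β : Λ → K}
    (hα : (range α).IsPWO) (hβ : (range β).IsPWO) {lam : K}
    (hlam : IsGLB {s : K | 0 ≤ s ∧ ∀ k, 0 ≤ (1 - s) * α k + s * β k} lam)
    (hpos : 0 < lam) (hle : lam ≤ 1) : ∃ k₀ : Λ, (1 - lam) * α k₀ + lam * β k₀ = 0 := by
  have hpairs : (range fun k => (α k, β k)).IsPWO :=
    (hα.prod hβ).mono (range_subset_iff.mpr fun k => ⟨mem_range_self k, mem_range_self k⟩)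
  obtain ⟨F, hF, hFpairs⟩ := exists_finite_forall_exists_le_of_isPWO_range hpairs
  simp only [← AffineMap.lineMap_apply_ring] at hlam ⊢
  have hcont : ∀ k, Continuous (AffineMap.lineMap (α k) (β k) : K →ᵃ[K] K) :=
    fun _ => AffineMap.lineMap_continuous
  have hdom : ∀ k, ∃ j ∈ F, ∀ s ∈ Ico 0 lam,
      AffineMap.lineMap (α j) (β j) s ≤ AffineMap.lineMap (α k) (β k) s := fun k => by
    obtain ⟨j, hj, hα_le, hβ_le⟩ := hFpairs k
    exact ⟨j, hj, fun s hs => lineMap_mono_endpoints hα_le hβ_le hs.1 (hs.2.le.trans hle)⟩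
  obtain ⟨k₀, -, hk₀⟩ := exists_mem_eq_of_isLeast_of_finite_dominating hF
    (fun j _ => (hcont j).continuousAt) hdom (isLeast_of_isGLB_of_continuous hcont hlam) hpos
  exact ⟨k₀, hk₀⟩

/-- The nef threshold `λ = inf { s ≥ 0 : (1-s)·α_k + s·β_k ≥ 0 ∀ k }` for
DCC coefficient sets is attained: some index `k₀` satisfies `(1-λ)·α_{k₀} + λ·β_{k₀} = 0`,
provided `0 < λ` and the defining set is nonempty. -/
theorem stmt_11 (M : ℝ) (hM : 0 < M) (I I' : Set ℝ)
    (hI : I ⊆ Set.Ico (-M) 0) (hI' : I' ⊆ Set.Ici (0 : ℝ))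
    (hIdcc : ¬∃ f : ℕ → ℝ, (∀ k, f k ∈ I) ∧ StrictAnti f)
    (hI'dcc : ¬∃ f : ℕ → ℝ, (∀ k, f k ∈ I') ∧ StrictAnti f)
    (Λ : Type*) (hΛ : Nonempty Λ) (α β : Λ → ℝ)
    (hα : ∀ k, α k ∈ I) (hβ : ∀ k, β k ∈ I')
    (lam : ℝ)
    (hlam : lam = sInf {s : ℝ | 0 ≤ s ∧ ∀ k, 0 ≤ (1 - s) * α k + s * β k})
    (hne : {s : ℝ | 0 ≤ s ∧ ∀ k, 0 ≤ (1 - s) * α k + s * β k}.Nonempty)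
    (hpos : 0 < lam) :
    ∃ k₀ : Λ, (1 - lam) * α k₀ + lam * β k₀ = 0 := by
  have hle : lam ≤ 1 :=
    hlam ▸ csInf_le ⟨0, fun _ hs => hs.1⟩ ⟨zero_le_one, fun k => by simpa using hI' (hβ k)⟩
  exact stmt_11_general
    ((isPWO_of_not_exists_strictAnti hIdcc).mono (range_subset_iff.mpr hα))
    ((isPWO_of_not_exists_strictAnti hI'dcc).mono (range_subset_iff.mpr hβ))
    (hlam ▸ isGLB_csInf hne ⟨0, fun _ hs => hs.1⟩) hpos hle
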